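/- Let f : ℝ^d → ℝ^d be measurable and locally bounded. Then there exists a measurable map f̃ : ℝ^d → ℝ^d with f̃ = f Lebesgue-almost everywhere such that F_f(x) = K_{f̃}(x) for every x ∈ ℝ^d. -/

import Mathlib

/-!
Write `F = Filippov f`. If `‖y - x‖ < δ / 2`, then `F y` lies in the closed convex hull of
`f` over the ball of radius `δ` about `x` minus any prescribed null set
(`Filippov_subset_of_near`). Hence `F` has closed graph (`isClosed_graph_Filippov`), and any
`ftilde` that equals `f` almost everywhere and is a selection of `F` at *every* point
satisfies `F = Krasovskii ftilde`.

It remains to find a Borel selection of `F` equal to `f` almost everywhere.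

* For almost every `x`, the point `(x, f x)` lies in the support of the image of Lebesgue measure
  under `x ↦ (x, f x)`, and then `f x ∈ F x` (`ae_mem_Filippov`). The set of such `x` is Borel,
  because the graph of `F` is closed, so `f` itself can be kept there.
* On the remaining null set one takes the element `m x` of least norm of the nonempty
  (`Filippov_nonempty`, where local boundedness enters) closed convex set `F x`. Closedness of
  the graph makes `{x | F x ∩ K ≠ ∅}` closed for every compact `K`, and for closed `C` the
  set `{x | m x ∈ C}` is a countable Boolean combination of such sets
  (`measurable_of_least_norm`).
-/

open MeasureTheory Filter Topology Metric Set
open scoped RealInnerProductSpace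

noncomputable section

abbrev Euc (d : ℕ) := EuclideanSpace ℝ (Fin d)

/-- `f` is locally bounded. -/
def LocallyBounded {d : ℕ} (f : Euc d → Euc d) : Prop :=
  ∀ x : Euc d, ∃ r > 0, ∃ C, ∀ y, ‖y - x‖ < r → ‖f y‖ ≤ C

/-- Filippov set-valued map: intersection over Lebesgue-null sets `N` and radii `δ > 0`
of the closed convex hull of `{f y : ‖y - x‖ < δ, y ∉ N}`. -/
def Filippov {d : ℕ} (f : Euc d → Euc d) (x : Euc d) : Set (Euc d) :=
  ⋂ (N : Set (Euc d)) (_ : volume N = 0) (δ : ℝ) (_ : 0 < δ),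
    closure (convexHull ℝ (f '' {y | ‖y - x‖ < δ ∧ y ∉ N}))

/-- Krasovskii set-valued map: intersection over radii `δ > 0` of the closed convex hull
of `{f y : ‖y - x‖ < δ}`. -/
def Krasovskii {d : ℕ} (f : Euc d → Euc d) (x : Euc d) : Set (Euc d) :=
  ⋂ (δ : ℝ) (_ : 0 < δ), closure (convexHull ℝ (f '' {y | ‖y - x‖ < δ}))

lemma Filippov_subset_of_near {d : ℕ} (f : Euc d → Euc d) {x y : Euc d} {δ : ℝ} (hδ : 0 < δ)
    (hy : ‖y - x‖ < δ / 2) {N : Set (Euc d)} (hN : volume N = 0) :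
    Filippov f y ⊆ closure (convexHull ℝ (f '' {z | ‖z - x‖ < δ ∧ z ∉ N})) := by
  intro v hv
  simp only [Filippov, mem_iInter] at hv
  refine closure_mono (convexHull_mono (image_mono ?_)) (hv N hN (δ / 2) (by positivity))
  rintro z ⟨hz, hzN⟩
  refine ⟨?_, hzN⟩
  have := norm_sub_le_norm_sub_add_norm_sub z y x
  linarith

lemma isClosed_graph_Filippov {d : ℕ} (f : Euc d → Euc d) :
    IsClosed {p : Euc d × Euc d | p.2 ∈ Filippov f p.1} := by
  rw [← isOpen_compl_iff, isOpen_iff_mem_nhds]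
  rintro ⟨x, v⟩ hv
  simp only [mem_compl_iff, mem_ofPred_eq, Filippov, mem_iInter, not_forall] at hv
  obtain ⟨N, hN, δ, hδ, hv⟩ := hv
  have h1 : ball x (δ / 2) ∈ 𝓝 x := ball_mem_nhds x (by positivity)
  have h2 := isClosed_closure.isOpen_compl.mem_nhds (mem_compl hv)
  filter_upwards [prod_mem_nhds h1 h2] with p hp hpF
  exact hp.2 (Filippov_subset_of_near f hδ (by simpa [dist_eq_norm] using hp.1) hN hpF)

lemma isClosed_Filippov {d : ℕ} (f : Euc d → Euc d) (x : Euc d) : IsClosed (Filippov f x) :=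
  (isClosed_graph_Filippov f).preimage (f := fun v => (x, v)) (by fun_prop)

lemma convex_Filippov {d : ℕ} (f : Euc d → Euc d) (x : Euc d) : Convex ℝ (Filippov f x) :=
  convex_iInter fun _ => convex_iInter fun _ => convex_iInter fun _ => convex_iInter fun _ =>
    (convex_convexHull ℝ _).closure

lemma isClosed_hit_Filippov {d : ℕ} (f : Euc d → Euc d) {K : Set (Euc d)} (hK : IsCompact K) :
    IsClosed {x | (Filippov f x ∩ K).Nonempty} := by
  rw [← isOpen_compl_iff, isOpen_iff_mem_nhds]
  intro x hx
  -- The compact slice `{x} ×ˢ K` misses the closed graph, hence so does a neighbourhood of it.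
  have hsub : ({x} : Set (Euc d)) ×ˢ K ⊆ {p : Euc d × Euc d | p.2 ∈ Filippov f p.1}ᶜ := by
    rintro ⟨y, v⟩ ⟨hy, hv⟩ hF
    obtain rfl : y = x := hy
    exact hx ⟨v, hF, hv⟩
  obtain ⟨U, V, hU, -, hxU, hKV, hUV⟩ :=
    generalized_tube_lemma isCompact_singleton hK (isClosed_graph_Filippov f).isOpen_compl hsub
  filter_upwards [hU.mem_nhds (hxU rfl)] with y hy
  rintro ⟨v, hvF, hvK⟩
  exact hUV (mk_mem_prod hy (hKV hvK)) hvF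

/-- Almost every `x` has `(x, f x)` in the support of the image measure on the graph of `f`, so
that `f` takes values near `f x` on a set of positive measure in every ball about `x`. -/
lemma ae_mem_Filippov {d : ℕ} {f : Euc d → Euc d} (hf : Measurable f) :
    ∀ᵐ x ∂(volume : Measure (Euc d)), f x ∈ Filippov f x := by
  have hg : Measurable fun x => (x, f x) := measurable_id.prodMk hf
  have h := ae_of_ae_map hg.aemeasurable
    (Measure.support_mem_ae (μ := Measure.map (fun x => (x, f x)) volume))
  filter_upwards [h] with x hx
  simp only [Filippov, mem_iInter]
  intro N hN δ hδ
  refine closure_mono (subset_convexHull ℝ _) (Metric.mem_closure_iff.2 fun ε hε => ?_)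
  have hpos := (Measure.mem_support_iff_forall _).1 hx _
    (prod_mem_nhds (ball_mem_nhds x hδ) (ball_mem_nhds (f x) hε))
  rw [Measure.map_apply hg (measurableSet_ball.prod measurableSet_ball)] at hpos
  obtain ⟨y, hy, hyN⟩ : (((fun x => (x, f x)) ⁻¹' ball x δ ×ˢ ball (f x) ε) \ N).Nonempty := by
    apply nonempty_of_measure_ne_zero (μ := volume)
    rw [measure_sdiff_null hN]
    exact hpos.ne'
  exact ⟨f y, ⟨y, ⟨by simpa [dist_eq_norm] using hy.1, hyN⟩, rfl⟩, mem_ball'.1 hy.2⟩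

/-- With `C` a bound for `f` near `x`, the closed set of points `y` where `Filippov f y` meets
`closedBall 0 C` contains almost every point near `x`, hence `x` itself. -/
lemma Filippov_nonempty {d : ℕ} {f : Euc d → Euc d} (hf : Measurable f)
    (hb : LocallyBounded f) (x : Euc d) : (Filippov f x).Nonempty := by
  obtain ⟨r, hr, C, hC⟩ := hb x
  have hcl := isClosed_hit_Filippov f (isCompact_closedBall (0 : Euc d) C)
  have hx : x ∈ closure {y | (Filippov f y ∩ closedBall 0 C).Nonempty} := by
    refine mem_closure_iff_nhds.2 fun t ht => ?_
    have hd : Dense {y | f y ∈ Filippov f y} := Measure.dense_of_ae (ae_mem_Filippov hf)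
    obtain ⟨y, hy, hyt, hyr⟩ :=
      hd.inter_nhds_nonempty (inter_mem ht (ball_mem_nhds x hr))
    exact ⟨y, hyt, f y, hy, by simpa using hC y (by simpa [dist_eq_norm] using hyr)⟩
  rw [hcl.closure_eq] at hx
  exact hx.mono inter_subset_left

lemma exists_least_norm {d : ℕ} {S : Set (Euc d)} (hS : IsClosed S) (hne : S.Nonempty) :
    ∃ v ∈ S, ∀ w ∈ S, ‖v‖ ≤ ‖w‖ := by
  obtain ⟨v, hv, h⟩ := hS.exists_infDist_eq_dist hne 0
  refine ⟨v, hv, fun w hw => ?_⟩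
  have := infDist_le_dist_of_mem (x := (0 : Euc d)) hw
  rw [h] at this
  simpa using this

/-- By the parallelogram law, a convex set has at most one element of least norm. -/
lemma least_norm_unique {d : ℕ} {S : Set (Euc d)} (hS : Convex ℝ S) {v w : Euc d}
    (hv : v ∈ S) (hmin : ∀ u ∈ S, ‖v‖ ≤ ‖u‖) (hw : w ∈ S) (hwv : ‖w‖ ≤ ‖v‖) : w = v := by
  have hmid := hmin _ (hS hv hw (by norm_num : (0 : ℝ) ≤ 1 / 2) (by norm_num : (0 : ℝ) ≤ 1 / 2)
    (by norm_num))
  rw [← smul_add, norm_smul] at hmid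
  norm_num at hmid
  have hpar := parallelogram_law_with_norm ℝ v w
  have h0 : ‖v - w‖ = 0 := by nlinarith [norm_nonneg v, norm_nonneg w, norm_nonneg (v - w)]
  exact (sub_eq_zero.1 (norm_eq_zero.1 h0)).symm

lemma measurable_of_least_norm {d : ℕ} (f : Euc d → Euc d) {m : Euc d → Euc d}
    (hm : ∀ x, m x ∈ Filippov f x) (hmin : ∀ x, ∀ w ∈ Filippov f x, ‖m x‖ ≤ ‖w‖) :
    Measurable m := by
  refine measurable_of_isClosed fun C hC => ?_
  -- `m x ∈ C` iff `Filippov f x ∩ C` meets every ball `closedBall 0 t` that `Filippov f x` meets.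
  have key : m ⁻¹' C = ⋂ t : ℚ, ({x | (Filippov f x ∩ closedBall 0 (t : ℝ)).Nonempty}ᶜ ∪
      {x | (Filippov f x ∩ (closedBall 0 (t : ℝ) ∩ C)).Nonempty}) := by
    ext x
    simp only [mem_preimage, mem_iInter, mem_union, mem_compl_iff, mem_ofPred_eq]
    constructor
    · intro hx t
      by_cases h : (Filippov f x ∩ closedBall 0 (t : ℝ)).Nonempty
      · obtain ⟨w, hwF, hwt⟩ := h
        exact Or.inr ⟨m x, hm x,
          by simpa using (hmin x w hwF).trans (by simpa using hwt), hx⟩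
      · exact Or.inl h
    · intro h
      have hhit : ∀ t : ℚ, ‖m x‖ < t → ∃ w ∈ Filippov f x ∩ C, ‖w‖ ≤ t := by
        intro t ht
        obtain h' | ⟨w, hwF, hwt, hwC⟩ := h t
        · exact absurd ⟨m x, hm x, by simpa using ht.le⟩ h'
        · exact ⟨w, ⟨hwF, hwC⟩, by simpa using hwt⟩
      obtain ⟨t₀, ht₀⟩ := exists_rat_gt ‖m x‖
      obtain ⟨w₀, hw₀, -⟩ := hhit t₀ ht₀
      obtain ⟨c, hc, hcmin⟩ := exists_least_norm ((isClosed_Filippov f x).inter hC) ⟨w₀, hw₀⟩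
      have hcm : ‖c‖ ≤ ‖m x‖ := by
        by_contra! hlt
        obtain ⟨t, ht, htc⟩ := exists_rat_btwn hlt
        obtain ⟨w, hw, hwt⟩ := hhit t ht
        linarith [hcmin w hw]
      rw [← least_norm_unique (convex_Filippov f x) (hm x) (hmin x) hc.1 hcm]
      exact hc.2
  rw [key]
  refine MeasurableSet.iInter fun t => MeasurableSet.union ?_ ?_
  · exact (isClosed_hit_Filippov f (isCompact_closedBall 0 _)).measurableSet.compl
  · exact (isClosed_hit_Filippov f ((isCompact_closedBall 0 _).inter_right hC)).measurableSet

lemma Filippov_eq_Krasovskii {d : ℕ} {f g : Euc d → Euc d}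
    (hae : ∀ᵐ x ∂(volume : Measure (Euc d)), g x = f x) (hg : ∀ x, g x ∈ Filippov f x)
    (x : Euc d) : Filippov f x = Krasovskii g x := by
  apply Subset.antisymm
  · intro v hv
    simp only [Krasovskii, mem_iInter]
    simp only [Filippov, mem_iInter] at hv
    intro δ hδ
    refine closure_mono (convexHull_mono ?_) (hv {y | ¬ g y = f y} (ae_iff.1 hae) δ hδ)
    rintro _ ⟨y, ⟨hy, hyN⟩, rfl⟩
    exact ⟨y, hy, not_not.1 hyN⟩
  · intro v hv
    simp only [Krasovskii, mem_iInter] at hv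
    simp only [Filippov, mem_iInter]
    intro N hN δ hδ
    refine closure_minimal (convexHull_min ?_ (convex_convexHull ℝ _).closure) isClosed_closure
      (hv (δ / 2) (by positivity))
    rintro _ ⟨y, hy, rfl⟩
    exact Filippov_subset_of_near f hδ hy hN (hg y)

/-- there is a measurable `f̃ = f` a.e. such that `F_f = K_{f̃}` everywhere. -/
theorem stmt_4 {d : ℕ} (f : Euc d → Euc d) (hf_meas : Measurable f)
    (hf_bdd : LocallyBounded f) :
    ∃ ftilde : Euc d → Euc d, Measurable ftilde ∧
      (∀ᵐ x ∂(volume : Measure (Euc d)), ftilde x = f x) ∧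
      ∀ x, Filippov f x = Krasovskii ftilde x := by
  choose m hm hmin using fun x =>
    exists_least_norm (isClosed_Filippov f x) (Filippov_nonempty hf_meas hf_bdd x)
  have hG : MeasurableSet {x | f x ∈ Filippov f x} :=
    (measurable_id.prodMk hf_meas) (isClosed_graph_Filippov f).measurableSet
  classical
  have hae : ∀ᵐ x ∂(volume : Measure (Euc d)),
      {x | f x ∈ Filippov f x}.piecewise f m x = f x := by
    filter_upwards [ae_mem_Filippov hf_meas] with x hx
    exact piecewise_eq_of_mem _ _ _ hx
  refine ⟨_, hf_meas.piecewise hG (measurable_of_least_norm f hm hmin), hae,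
    Filippov_eq_Krasovskii hae fun x => ?_⟩
  by_cases hx : f x ∈ Filippov f x
  · rwa [piecewise_eq_of_mem {x | f x ∈ Filippov f x} f m hx]
  · rw [piecewise_eq_of_notMem {x | f x ∈ Filippov f x} f m hx]
    exact hm x
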